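/- arXiv:1412.7526 — 2 statements merged into one kernel-verified Lean document; each statement's English description precedes it below -/
import Mathlib

section
/- (Finite systems.) Fix N ∈ ℕ, t₀ ∈ (0,∞), and let (t_p)_{p∈ℕ} be a sequence with t₀ < t₁ < t₂ < … and t_p → ∞. For n = 1,…,N let g_n : J × ℝ^N → ℝ be continuous and η_n : C([0,t₀],ℝ) → ℝ be continuous linear functionals with ⟨η_n,1⟩ ≠ 1. Write g = (g_1,…,g_N), ‖y‖_∞ = max_{1≤n≤N}|y_n|, η_* = (‖η_1‖,…,‖η_N‖), and η̲ = (1/(1−⟨η_1,1⟩),…,1/(1−⟨η_N,1⟩)). Assume there exist a nonnegative A ∈ L¹(0,t₀), B ≥ 0, and for each p ∈ ℕ a constant C_p ≥ 0 such that for all x ∈ ℝ^N: ‖g(t,x)‖_∞ ≤ A(t)‖x‖_∞ + B for t ∈ [0,t₀], and ‖g(t,x)‖_∞ ≤ C_p(‖x‖_∞ + 1) for t ∈ [t₀,t_p]. If (‖η̲‖_∞·‖η_*‖_∞ + 1)·‖A‖_{L¹} < 1, then there exist differentiable functions x_1,…,x_N : J → ℝ with x_n'(t) = g_n(t, x_1(t),…,x_N(t))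 for all t ∈ J and x_n(0) = ⟨η_n, x_n|_{[0,t₀]}⟩ for n = 1,…,N. -/
open Set MeasureTheory

noncomputable section

/-- The norm `‖y‖_∞ = max_{1 ≤ n ≤ N} |y_n|` on `ℝ^N`. -/
def semF {N : ℕ} (y : Fin N → ℝ) : ℝ := ⨆ i : Fin N, |y i|

/-!
On `[0, t₀]` the nonlocal problem is a fixed point problem `u = const (Λ (V u)) + V u`, where `V` is
the Volterra integral operator of `g` and `Λ` recovers the initial value from `V u`. The smallness
condition gives an a priori bound on `u`, so the Leray–Schauder principle applies. Beyond `t₀` the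
same principle, now with Gronwall's inequality as a priori bound, extends the solution across one
interval of length `1` after another.

Leray–Schauder is reduced to Schauder by radial retraction, and Schauder to Brouwer by a partition
of unity. For Brouwer, let `g` be smooth and compactly supported with `‖x - g x‖ ≥ δ` everywhere,
and let the Jacobian of `ψ` be a nonnegative bump supported in the ball of radius `δ`. Then
`ψ ∘ (id - g)` has zero Jacobian but agrees with `ψ` off a compact set, contradicting the invariance
of `∫ det (D G)` under compactly supported modifications of `G`. The latter holds because
`∫ det (s • id + D G)` is polynomial in `s` and, for large `s`, the volume of the image of a
bijection.
-/

open Filter Topology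
open scoped NNReal

/-! ### Null Lagrangians -/

section Det

lemma det_eq_sum_eval_lagrangeBasis_mul_det {K V ι : Type*} [Field K] [AddCommGroup V]
    [Module K V] [FiniteDimensional K V] [DecidableEq ι] {s : Finset ι} {v : ι → K}
    (hv : InjOn v s) (hs : Module.finrank K V < s.card) (M : V →ₗ[K] V) :
    LinearMap.det M =
      ∑ i ∈ s, (Lagrange.basis s v i).eval 0 * LinearMap.det (v i • LinearMap.id + M) := by
  have eval_eq (t : K) : (-M).charpoly.eval t = LinearMap.det (t • LinearMap.id + M) := by
    rw [LinearMap.eval_charpoly, sub_neg_eq_add]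
    rfl
  have degree_lt : (-M).charpoly.degree < s.card :=
    Polynomial.degree_le_natDegree.trans_lt <| by
      rw [LinearMap.charpoly_natDegree]
      exact_mod_cast hs
  have interpolation := congrArg (Polynomial.eval 0) (Lagrange.eq_interpolate hv degree_lt)
  simpa only [Lagrange.interpolate_apply, Polynomial.eval_finsetSum, eval_eq, zero_smul, zero_add,
    Polynomial.eval_mul, Polynomial.eval_C, mul_comm] using interpolation

variable {E : Type*} [NormedAddCommGroup E] [NormedSpace ℝ E]

lemma bijective_smul_add_of_lipschitzWith [CompleteSpace E] {G : E → E} {K : ℝ≥0}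
    (hG : LipschitzWith K G) {s : ℝ} (hs : K < s) :
    Function.Bijective fun x => s • x + G x := by
  have s_pos : 0 < s := K.coe_nonneg.trans_lt hs
  let e : E ≃L[ℝ] E := ContinuousLinearEquiv.smulLeft (Units.mk0 s s_pos.ne')
  have approx : ApproximatesLinearOn (fun x => s • x + G x) (e : E →L[ℝ] E) univ K := by
    intro x _ y _
    have : s • x + G x - (s • y + G y) - e (x - y) = G x - G y := by
      have : e (x - y) = s • x - s • y := smul_sub s x y
      rw [this]
      abel
    simpa only [ContinuousLinearEquiv.coe_coe, this] using hG.norm_sub_le x y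
  have small : Subsingleton E ∨ K < ‖(e.symm : E →L[ℝ] E)‖₊⁻¹ := by
    refine (subsingleton_or_nontrivial E).imp_right fun (_ : Nontrivial E) => ?_
    have : (e.symm : E →L[ℝ] E) = s⁻¹ • ContinuousLinearMap.id ℝ E := rfl
    rwa [← NNReal.coe_lt_coe, NNReal.coe_inv, coe_nnnorm, this, norm_smul,
      ContinuousLinearMap.norm_id, mul_one, norm_inv, inv_inv, Real.norm_of_nonneg s_pos.le]
  exact ⟨(injOn_univ).1 (approx.injOn small), approx.surjective small⟩

variable [FiniteDimensional ℝ E]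

lemma det_smul_id_add_ne_zero {M : E →L[ℝ] E} {s : ℝ} (hs : ‖M‖ < s) :
    (s • ContinuousLinearMap.id ℝ E + M).det ≠ 0 := by
  have injective := (bijective_smul_add_of_lipschitzWith M.lipschitz (s := s) hs).injective
  intro h
  refine (LinearMap.bot_lt_ker_of_det_eq_zero h).ne' (LinearMap.ker_eq_bot.2 ?_)
  exact injective

lemma det_smul_id_add_pos {M : E →L[ℝ] E} {s : ℝ} (hs : ‖M‖ < s) :
    0 < (s • ContinuousLinearMap.id ℝ E + M).det := by
  have s_pos : 0 < s := (norm_nonneg M).trans_lt hs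
  have continuous : Continuous fun τ : ℝ => (s • ContinuousLinearMap.id ℝ E + τ • M).det :=
    ContinuousLinearMap.continuous_det.comp (by fun_prop)
  have pos_at_zero : 0 < (s • ContinuousLinearMap.id ℝ E + (0 : ℝ) • M).det := by
    simp [ContinuousLinearMap.det, s_pos]
  by_contra! h
  obtain ⟨τ, ⟨τ_nonneg, τ_le_one⟩, hτ⟩ := intermediate_value_Icc' zero_le_one
    continuous.continuousOn (show (0 : ℝ) ∈ Icc _ _ from ⟨by rwa [one_smul], pos_at_zero.le⟩)
  refine det_smul_id_add_ne_zero (lt_of_le_of_lt ?_ hs) hτ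
  rw [norm_smul, Real.norm_of_nonneg τ_nonneg]
  exact mul_le_of_le_one_left (norm_nonneg M) τ_le_one

end Det

section NullLagrangian

variable {E : Type*} [NormedAddCommGroup E] [NormedSpace ℝ E] [FiniteDimensional ℝ E]
  [MeasurableSpace E] [BorelSpace E] (μ : Measure E) [μ.IsAddHaarMeasure] {B : Set E}

lemma setIntegral_det_eq_measureReal_image (hB : MeasurableSet B) {F : E → E}
    {F' : E → E →L[ℝ] E} (hF : ∀ x, HasFDerivAt F (F' x) x) (F_inj : F.Injective)
    (det_pos : ∀ x, 0 < (F' x).det) :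
    ∫ x in B, (F' x).det ∂μ = μ.real (F '' B) := by
  have := integral_image_eq_integral_abs_det_fderiv_smul μ hB
    (fun x _ => (hF x).hasFDerivWithinAt) F_inj.injOn fun _ => (1 : ℝ)
  simpa [abs_of_pos, det_pos] using this.symm

lemma image_eq_image_of_eqOn_compl {α β : Type*} {F G : α → β} {B : Set α} (hF : F.Bijective)
    (hG : G.Bijective) (h : EqOn F G Bᶜ) : F '' B = G '' B := by
  rw [← compl_inj_iff, ← image_compl_eq hF, ← image_compl_eq hG, h.image_eq]

lemma setIntegral_det_smul_id_add_congr (hB : MeasurableSet B) {G H : E → E}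
    {G' H' : E → E →L[ℝ] E} {K : ℝ≥0} (G_lip : LipschitzWith K G) (H_lip : LipschitzWith K H)
    (hG : ∀ x, HasFDerivAt G (G' x) x) (hH : ∀ x, HasFDerivAt H (H' x) x)
    (h : EqOn G H Bᶜ) {s : ℝ} (hs : K < s) :
    ∫ x in B, (s • ContinuousLinearMap.id ℝ E + G' x).det ∂μ =
      ∫ x in B, (s • ContinuousLinearMap.id ℝ E + H' x).det ∂μ := by
  have integral_eq {F : E → E} {F' : E → E →L[ℝ] E} (F_lip : LipschitzWith K F)
      (hF : ∀ x, HasFDerivAt F (F' x) x) :=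
    setIntegral_det_eq_measureReal_image μ hB
      (fun x => ((hasFDerivAt_id x).const_smul s).add (hF x))
      (bijective_smul_add_of_lipschitzWith F_lip hs).injective
      fun x => det_smul_id_add_pos (((hF x).le_of_lipschitz F_lip).trans_lt hs)
  refine (integral_eq G_lip hG).trans (Eq.trans ?_ (integral_eq H_lip hH).symm)
  refine congrArg _ (image_eq_image_of_eqOn_compl (bijective_smul_add_of_lipschitzWith G_lip hs)
    (bijective_smul_add_of_lipschitzWith H_lip hs) fun x hx => ?_)
  simp only [Pi.add_apply, Pi.smul_apply, id, h hx]

lemma setIntegral_det_congr_of_lipschitzWith (hB : IsCompact B) {G H : E → E}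
    {G' H' : E → E →L[ℝ] E} {K : ℝ≥0} (G_lip : LipschitzWith K G) (H_lip : LipschitzWith K H)
    (hG : ∀ x, HasFDerivAt G (G' x) x) (hH : ∀ x, HasFDerivAt H (H' x) x)
    (hG' : Continuous G') (hH' : Continuous H') (h : EqOn G H Bᶜ) :
    ∫ x in B, (G' x).det ∂μ = ∫ x in B, (H' x).det ∂μ := by
  let node (i : ℕ) : ℝ := K + 1 + i
  let nodes := Finset.range (Module.finrank ℝ E + 1)
  have node_inj : InjOn node nodes := fun i _ j _ hij => by simpa [node] using hij
  have expansion {F' : E → E →L[ℝ] E} (hF' : Continuous F') :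
      ∫ x in B, (F' x).det ∂μ = ∑ i ∈ nodes, (Lagrange.basis nodes node i).eval 0 *
        ∫ x in B, (node i • ContinuousLinearMap.id ℝ E + F' x).det ∂μ := by
    simp_rw [← integral_const_mul]
    rw [← integral_finsetSum]
    · refine integral_congr_ae (.of_forall fun x => ?_)
      exact det_eq_sum_eval_lagrangeBasis_mul_det node_inj (by simp [nodes]) _
    · refine fun i _ => Integrable.const_mul ?_ _
      exact (ContinuousLinearMap.continuous_det.comp (by fun_prop)).continuousOn
        |>.integrableOn_compact hB
  rw [expansion hG', expansion hH']
  refine Finset.sum_congr rfl fun i _ => ?_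
  rw [setIntegral_det_smul_id_add_congr μ hB.measurableSet G_lip H_lip hG hH h]
  have : (0 : ℝ) ≤ i := i.cast_nonneg
  linarith

lemma setIntegral_det_fderiv_congr (hB : IsCompact B) {G H : E → E} {K : ℝ≥0}
    (H_lip : LipschitzWith K H) (hG : ContDiff ℝ 1 G) (hH : ContDiff ℝ 1 H)
    (h : EqOn G H Bᶜ) :
    ∫ x in B, (fderiv ℝ G x).det ∂μ = ∫ x in B, (fderiv ℝ H x).det ∂μ := by
  have compact_support : HasCompactSupport (G - H) :=
    .intro hB fun x hx => sub_eq_zero.2 (h hx)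
  obtain ⟨L, hL⟩ := (hG.sub hH).lipschitzWith_of_hasCompactSupport compact_support one_ne_zero
  have G_lip : LipschitzWith (K + L) G := by
    simpa only [Pi.sub_apply, add_sub_cancel] using H_lip.add hL
  exact setIntegral_det_congr_of_lipschitzWith μ hB G_lip (H_lip.weaken le_self_add)
    (fun x => (hG.differentiable one_ne_zero x).hasFDerivAt)
    (fun x => (hH.differentiable one_ne_zero x).hasFDerivAt)
    (hG.continuous_fderiv one_ne_zero) (hH.continuous_fderiv one_ne_zero) h

end NullLagrangian

/-! ### Brouwer's fixed point theorem -/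

section Brouwer

lemma exists_fixedPoint_of_forall_exists_dist_lt {X : Type*} [MetricSpace X] {T : X → X}
    (hT : Continuous T) {S : Set X} (hS : IsCompact S) (T_mem : ∀ x, T x ∈ S)
    (approx : ∀ ε > 0, ∃ x, dist x (T x) < ε) : ∃ x, T x = x := by
  choose x hx using fun n : ℕ => approx (1 / (n + 1)) Nat.one_div_pos_of_nat
  obtain ⟨y, -, φ, φ_mono, T_tendsto⟩ := hS.tendsto_subseq fun n => T_mem (x n)
  have dist_tendsto : Tendsto (fun n => dist (x n) (T (x n))) atTop (𝓝 0) :=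
    squeeze_zero (fun _ => dist_nonneg) (fun n => (hx n).le)
      tendsto_one_div_add_atTop_nhds_zero_nat
  have x_tendsto : Tendsto (x ∘ φ) atTop (𝓝 y) :=
    T_tendsto.congr_dist <| by
      simpa only [dist_comm, Function.comp_def] using dist_tendsto.comp φ_mono.tendsto_atTop
  exact ⟨y, tendsto_nhds_unique ((hT.tendsto y).comp x_tendsto) T_tendsto⟩

lemma exists_contDiff_lipschitzWith_deriv_eq {b : ℝ → ℝ} (hb : Continuous b) {K : ℝ≥0}
    (hK : ∀ t, ‖b t‖₊ ≤ K) :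
    ∃ θ : ℝ → ℝ, ContDiff ℝ 1 θ ∧ LipschitzWith K θ ∧ deriv θ = b := by
  have hθ (t : ℝ) := (hb.integral_hasStrictDerivAt 0 t).hasDerivAt
  have deriv_eq : deriv (fun t => ∫ s in (0 : ℝ)..t, b s) = b := funext fun t => (hθ t).deriv
  refine ⟨_, contDiff_one_iff_deriv.2 ⟨fun t => (hθ t).differentiableAt, by rwa [deriv_eq]⟩,
    lipschitzWith_of_nnnorm_deriv_le (fun t => (hθ t).differentiableAt) ?_, deriv_eq⟩
  simpa only [deriv_eq] using hK

variable {ι : Type*} [Fintype ι]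

lemma det_fderiv_coordinatewise {θ : ℝ → ℝ} (hθ : Differentiable ℝ θ) (y : ι → ℝ) :
    (fderiv ℝ (fun (z : ι → ℝ) i => θ (z i)) y).det = ∏ i, deriv θ (y i) := by
  classical
  have hasFDerivAt : HasFDerivAt (fun (z : ι → ℝ) i => θ (z i))
      (ContinuousLinearMap.pi fun i => deriv θ (y i) • ContinuousLinearMap.proj i) y :=
    hasFDerivAt_pi.2 fun i => (hθ (y i)).hasDerivAt.comp_hasFDerivAt y
      (ContinuousLinearMap.proj (R := ℝ) (φ := fun _ : ι => ℝ) i).hasFDerivAt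
  have toLin_diagonal :
      ((ContinuousLinearMap.pi fun i => deriv θ (y i) • ContinuousLinearMap.proj i :
        (ι → ℝ) →L[ℝ] (ι → ℝ)) : (ι → ℝ) →ₗ[ℝ] (ι → ℝ)) =
      Matrix.toLin' (Matrix.diagonal fun i => deriv θ (y i)) :=
    LinearMap.ext fun v => funext fun i => by simp [Matrix.mulVec_diagonal]
  rw [hasFDerivAt.fderiv, ContinuousLinearMap.det, toLin_diagonal, LinearMap.det_toLin',
    Matrix.det_diagonal]

lemma exists_contDiff_lipschitzWith_det_fderiv_bump {δ : ℝ} (hδ : 0 < δ) :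
    ∃ (ψ : (ι → ℝ) → ι → ℝ) (K : ℝ≥0), ContDiff ℝ 1 ψ ∧ LipschitzWith K ψ ∧
      (∀ y, 0 ≤ (fderiv ℝ ψ y).det) ∧ (∀ y, δ ≤ ‖y‖ → (fderiv ℝ ψ y).det = 0) ∧
      (fderiv ℝ ψ 0).det ≠ 0 := by
  have tent_le (t : ℝ) : ‖max 0 (δ - |t|)‖₊ ≤ δ.toNNReal := by
    rw [← NNReal.coe_le_coe, coe_nnnorm, Real.norm_of_nonneg (le_max_left _ _),
      Real.coe_toNNReal _ hδ.le]
    exact max_le hδ.le (sub_le_self δ (abs_nonneg t))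
  obtain ⟨θ, θ_contDiff, θ_lip, deriv_θ⟩ :=
    exists_contDiff_lipschitzWith_deriv_eq (b := fun t => max 0 (δ - |t|)) (by fun_prop) tent_le
  have det_eq (y : ι → ℝ) :
      (fderiv ℝ (fun (z : ι → ℝ) i => θ (z i)) y).det = ∏ i, max 0 (δ - |y i|) := by
    simp only [det_fderiv_coordinatewise (θ_contDiff.differentiable one_ne_zero), deriv_θ]
  refine ⟨fun y i => θ (y i), δ.toNNReal,
    contDiff_pi.2 fun i => θ_contDiff.comp (contDiff_apply ℝ ℝ i), ?_, fun y => ?_,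
    fun y hy => ?_, ?_⟩
  · refine .of_dist_le_mul fun x y => (dist_pi_le_iff (by positivity)).2 fun i => ?_
    grw [θ_lip.dist_le_mul, dist_le_pi_dist x y i]
  · rw [det_eq]
    exact Finset.prod_nonneg fun i _ => le_max_left _ _
  · obtain ⟨i, hi⟩ : ∃ i, δ ≤ ‖y i‖ := by
      contrapose! hy
      exact (pi_norm_lt_iff hδ).2 hy
    rw [det_eq]
    exact Finset.prod_eq_zero (Finset.mem_univ i) (max_eq_left (sub_nonpos.2 hi))
  · simp [det_eq, hδ.le, hδ.ne']

lemma exists_norm_sub_lt_of_hasCompactSupport {g : (ι → ℝ) → ι → ℝ} (hg : ContDiff ℝ 1 g)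
    (g_supp : HasCompactSupport g) {δ : ℝ} (hδ : 0 < δ) : ∃ x, ‖x - g x‖ < δ := by
  by_contra! no_approx
  obtain ⟨ψ, K, ψ_contDiff, ψ_lip, det_nonneg, det_eq_zero, det_zero_ne⟩ :=
    exists_contDiff_lipschitzWith_det_fderiv_bump (ι := ι) hδ
  let B := tsupport g ∪ Metric.closedBall 0 δ
  have B_compact : IsCompact B := g_supp.isCompact.union (isCompact_closedBall 0 δ)
  have id_sub_contDiff : ContDiff ℝ 1 fun x => x - g x := contDiff_id.sub hg
  have det_comp_eq_zero (x : ι → ℝ) : (fderiv ℝ (fun x => ψ (x - g x)) x).det = 0 := by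
    have chain_rule := fderiv_comp x (ψ_contDiff.differentiable one_ne_zero (x - g x))
      (id_sub_contDiff.differentiable one_ne_zero x)
    exact (congrArg ContinuousLinearMap.det chain_rule).trans <|
      (LinearMap.det_comp _ _).trans (mul_eq_zero_of_left (det_eq_zero _ (no_approx x)) _)
  have eqOn_compl : EqOn (fun x => ψ (x - g x)) ψ Bᶜ := fun x hx => by
    simp only [image_eq_zero_of_notMem_tsupport fun h => hx (.inl h), sub_zero]
  have det_eq_zero_of_notMem (x : ι → ℝ) (hx : x ∉ B) : (fderiv ℝ ψ x).det = 0 :=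
    det_eq_zero x <| le_of_not_gt fun h => hx (.inr (mem_closedBall_zero_iff.2 h.le))
  have integral_eq_zero : ∫ x, (fderiv ℝ ψ x).det = 0 := by
    rw [← setIntegral_eq_integral_of_forall_compl_eq_zero det_eq_zero_of_notMem,
      ← setIntegral_det_fderiv_congr volume B_compact ψ_lip (ψ_contDiff.comp id_sub_contDiff)
        ψ_contDiff eqOn_compl]
    exact integral_eq_zero_of_ae (.of_forall det_comp_eq_zero)
  have det_continuous : Continuous fun x => (fderiv ℝ ψ x).det :=
    ContinuousLinearMap.continuous_det.comp (ψ_contDiff.continuous_fderiv one_ne_zero)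
  exact integral_eq_zero.not_gt <|
    det_continuous.integral_pos_of_hasCompactSupport_nonneg_nonzero
      (.intro B_compact det_eq_zero_of_notMem) det_nonneg det_zero_ne

lemma exists_fixedPoint_of_continuous_of_bounded {f : (ι → ℝ) → ι → ℝ} (hf : Continuous f)
    {M : ℝ} (hM : ∀ x, ‖f x‖ ≤ M) : ∃ x, f x = x := by
  refine exists_fixedPoint_of_forall_exists_dist_lt hf (isCompact_closedBall 0 M)
    (fun x => mem_closedBall_zero_iff.2 (hM x)) fun ε hε => ?_
  obtain ⟨h, h_contDiff, h_approx, -⟩ := hf.exists_contDiff_approx 1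
    (continuous_const (y := ε / 2)) fun _ => half_pos hε
  have h_le (x : ι → ℝ) : ‖h x‖ ≤ M + ε / 2 := by
    grw [norm_le_norm_add_norm_sub' (h x) (f x), hM x, ← dist_eq_norm, (h_approx x).le]
  have M_nonneg : 0 ≤ M := (norm_nonneg _).trans (hM 0)
  let χ : ContDiffBump (0 : ι → ℝ) := ⟨M + ε, M + ε + 1, by positivity, lt_add_one _⟩
  obtain ⟨x, hx⟩ := exists_norm_sub_lt_of_hasCompactSupport (g := fun x => χ x • h x)
    (χ.contDiff.smul h_contDiff) χ.hasCompactSupport.smul_right (half_pos hε)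
  have x_le : ‖x‖ ≤ M + ε := by
    have : ‖χ x • h x‖ ≤ M + ε / 2 := by
      rw [norm_smul, Real.norm_of_nonneg χ.nonneg]
      exact (mul_le_of_le_one_left (norm_nonneg _) χ.le_one).trans (h_le x)
    linarith [norm_le_norm_add_norm_sub' x (χ x • h x), hx.le]
  rw [χ.one_of_mem_closedBall (mem_closedBall_zero_iff.2 x_le), one_smul] at hx
  refine ⟨x, ?_⟩
  calc dist x (f x) ≤ dist x (h x) + dist (h x) (f x) := dist_triangle _ _ _
    _ < ε / 2 + ε / 2 := add_lt_add (by rwa [dist_eq_norm]) (h_approx x)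
    _ = ε := add_halves ε

end Brouwer

/-! ### The Schauder and Leray–Schauder fixed point theorems -/

section Schauder

variable {X : Type*} [NormedAddCommGroup X] [NormedSpace ℝ X]

lemma exists_fixedPoint_of_continuous_of_mapsTo_compact {T : X → X} (hT : Continuous T)
    {S : Set X} (hS : IsCompact S) (T_mem : ∀ x, T x ∈ S) : ∃ x, T x = x := by
  refine exists_fixedPoint_of_forall_exists_dist_lt hT hS T_mem fun ε hε => ?_
  obtain ⟨net, -, net_finite, S_subset⟩ := hS.finite_cover_balls hε
  have : Fintype net := net_finite.fintype
  obtain ⟨w, hw⟩ := PartitionOfUnity.exists_isSubordinate hS.isClosed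
    (fun i : net => Metric.ball (i : X) ε) (fun _ => Metric.isOpen_ball)
    (S_subset.trans_eq (biUnion_eq_iUnion net _))
  let combination (a : net → ℝ) : X := ∑ i, a i • (i : X)
  have combination_continuous : Continuous combination := by fun_prop
  obtain ⟨a, ha⟩ := exists_fixedPoint_of_continuous_of_bounded
    (f := fun a i => w i (T (combination a))) (by fun_prop) (M := 1) fun a =>
      (pi_norm_le_iff_of_nonneg zero_le_one).2 fun i => by
        rw [Real.norm_of_nonneg (w.nonneg i _)]
        exact w.le_one i _
  refine ⟨combination a, ?_⟩
  have close := w.finsum_smul_mem_convex (g := fun i _ => (i : X)) (T_mem (combination a))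
    (fun i hi => Metric.mem_ball'.2 (hw i (subset_tsupport _ hi)))
    (convex_ball (T (combination a)) ε)
  have combination_eq : ∑ i, w i (T (combination a)) • (i : X) = combination a :=
    congrArg combination ha
  rwa [finsum_eq_sum_of_fintype, combination_eq, Metric.mem_ball] at close

/-- Radial retraction onto the closed ball of radius `r` around `0`, for `0 < r`. -/
def radialRetraction (r : ℝ) (x : X) : X := (r / max r ‖x‖) • x

variable {r : ℝ}

lemma continuous_radialRetraction (hr : 0 < r) : Continuous (radialRetraction (X := X) r) := by
  unfold radialRetraction
  fun_prop (disch := exact fun x => (lt_max_of_lt_left hr).ne')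

lemma radialRetraction_of_norm_le (hr : 0 < r) {x : X} (hx : ‖x‖ ≤ r) :
    radialRetraction r x = x := by
  rw [radialRetraction, max_eq_left hx, div_self hr.ne', one_smul]

lemma norm_radialRetraction_of_le_norm (hr : 0 < r) {x : X} (hx : r ≤ ‖x‖) :
    ‖radialRetraction r x‖ = r := by
  rw [radialRetraction, max_eq_right hx, norm_smul, Real.norm_of_nonneg (by positivity),
    div_mul_cancel₀ _ (hr.trans_le hx).ne']

lemma norm_radialRetraction_le (hr : 0 < r) (x : X) : ‖radialRetraction r x‖ ≤ r := by
  rcases le_total ‖x‖ r with hx | hx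
  · rwa [radialRetraction_of_norm_le hr hx]
  · exact (norm_radialRetraction_of_le_norm hr hx).le

lemma exists_fixedPoint_of_leraySchauder (hr : 0 < r) {T : X → X}
    (hT : ContinuousOn T (Metric.closedBall 0 r)) {S : Set X} (hS : IsCompact S)
    (T_mapsTo : MapsTo T (Metric.closedBall 0 r) S)
    (boundary : ∀ x, ‖x‖ = r → ∀ c ∈ Ioo (0 : ℝ) 1, x ≠ c • T x) :
    ∃ x, ‖x‖ ≤ r ∧ T x = x := by
  have retraction_mem (x : X) : radialRetraction r x ∈ Metric.closedBall 0 r :=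
    mem_closedBall_zero_iff.2 (norm_radialRetraction_le hr x)
  obtain ⟨x, hx⟩ := exists_fixedPoint_of_continuous_of_mapsTo_compact
    ((continuous_radialRetraction hr).comp
      (hT.comp_continuous (continuous_radialRetraction hr) retraction_mem))
    (hS.image (continuous_radialRetraction hr))
    fun x => mem_image_of_mem _ (T_mapsTo (retraction_mem x))
  have norm_x_le : ‖x‖ ≤ r := hx ▸ norm_radialRetraction_le hr _
  rw [Function.comp_apply, Function.comp_apply, radialRetraction_of_norm_le hr norm_x_le] at hx
  refine ⟨x, norm_x_le, ?_⟩
  rcases le_or_gt ‖T x‖ r with hTx | hTx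
  · exact (radialRetraction_of_norm_le hr hTx).symm.trans hx
  · have norm_x : ‖x‖ = r := hx ▸ norm_radialRetraction_of_le_norm hr hTx.le
    have factor_mem : r / ‖T x‖ ∈ Ioo (0 : ℝ) 1 :=
      ⟨div_pos hr (hr.trans hTx), (div_lt_one (hr.trans hTx)).2 hTx⟩
    rw [radialRetraction, max_eq_right hTx.le] at hx
    exact absurd hx.symm (boundary x norm_x _ factor_mem)

end Schauder

/-! ### Volterra integral operators -/

section Volterra

lemma isCompact_setOf_mapsTo_lipschitzWith {α β : Type*} [PseudoMetricSpace α] [CompactSpace α]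
    [MetricSpace β] {K : Set β} (hK : IsCompact K) (L : ℝ≥0) :
    IsCompact {v : C(α, β) | (∀ t, v t ∈ K) ∧ LipschitzWith L v} := by
  refine ArzelaAscoli.isCompact_of_equicontinuous _ ?_
    (LipschitzWith.uniformEquicontinuous _ L fun v => v.2.2).equicontinuous
  have image_eq : ContinuousMap.toFun '' {v : C(α, β) | (∀ t, v t ∈ K) ∧ LipschitzWith L v} =
      (univ.pi fun _ => K) ∩ {w | LipschitzWith L w} := by
    ext w
    constructor
    · rintro ⟨v, hv, rfl⟩
      exact ⟨fun t _ => hv.1 t, hv.2⟩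
    · rintro ⟨w_mem, w_lipschitz⟩
      exact ⟨⟨w, w_lipschitz.continuous⟩, ⟨fun t => w_mem t (mem_univ t), w_lipschitz⟩, rfl⟩
  rw [image_eq]
  refine (isCompact_univ_pi fun _ => hK).inter_right ?_
  simp only [lipschitzWith_iff_dist_le_mul, ofPred_forall]
  exact isClosed_iInter fun s => isClosed_iInter fun t => isClosed_le (by fun_prop) (by fun_prop)

variable {E : Type*} [NormedAddCommGroup E] {a b : ℝ} (hab : a ≤ b) (f : C(ℝ × E, E))
  (u : C(Icc a b, E))

lemma continuous_uncurry_comp_IccExtend :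
    Continuous fun q : C(Icc a b, E) × ℝ => f (q.2, IccExtend hab q.1 q.2) :=
  f.continuous.comp (continuous_snd.prodMk
    (continuous_fst.eval (continuous_projIcc.comp continuous_snd)))

lemma continuous_comp_IccExtend : Continuous fun s => f (s, IccExtend hab u s) :=
  (continuous_uncurry_comp_IccExtend hab f).comp (continuous_const.prodMk continuous_id)

variable [NormedSpace ℝ E]

/-- The Volterra integral operator `u ↦ (t ↦ ∫ s in a..t, f (s, u s))` on `C([a, b], E)`, bundled
as a continuous map. The integrand is extended to all of `ℝ` by `IccExtend`. -/
def volterra : C(C(Icc a b, E), C(Icc a b, E)) :=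
  ContinuousMap.curry
    ⟨fun q : C(Icc a b, E) × Icc a b => ∫ s in a..q.2, f (s, IccExtend hab q.1 s),
      intervalIntegral.continuous_parametric_intervalIntegral_of_continuous
        (f := fun (q : C(Icc a b, E) × Icc a b) s => f (s, IccExtend hab q.1 s))
        ((continuous_uncurry_comp_IccExtend hab f).comp
          (continuous_fst.fst.prodMk continuous_snd)) (by fun_prop)⟩

lemma volterra_apply (t : Icc a b) :
    volterra hab f u t = ∫ s in a..t, f (s, IccExtend hab u s) :=
  rfl

lemma volterra_smul (c : ℝ) : volterra hab (c • f) u = c • volterra hab f u := by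
  ext t
  exact intervalIntegral.integral_smul c _

variable {f u}

lemma norm_volterra_le {φ : ℝ → ℝ} (hφ : IntervalIntegrable φ volume a b)
    (h : ∀ t : Icc a b, ‖f (t, u t)‖ ≤ φ t) : ‖volterra hab f u‖ ≤ ∫ t in a..b, φ t := by
  have integrand_le : ∀ s ∈ Icc a b, ‖f (s, IccExtend hab u s)‖ ≤ φ s := fun s hs => by
    rw [IccExtend_of_mem hab u hs]
    exact h ⟨s, hs⟩
  have φ_nonneg : 0 ≤ᵐ[volume.restrict (Ioc a b)] φ :=
    (ae_restrict_mem measurableSet_Ioc).mono fun s hs =>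
      (norm_nonneg _).trans (integrand_le s (Ioc_subset_Icc_self hs))
  refine (ContinuousMap.norm_le _ (intervalIntegral.integral_nonneg hab fun s hs =>
    (norm_nonneg _).trans (integrand_le s hs))).2 fun t => ?_
  calc ‖volterra hab f u t‖ ≤ ∫ s in a..t, φ s :=
        intervalIntegral.norm_integral_le_of_norm_le t.2.1
          (ae_of_all _ fun s hs => integrand_le s ⟨hs.1.le, hs.2.trans t.2.2⟩)
          (hφ.mono_set (uIcc_subset_uIcc_left (by rw [uIcc_of_le hab]; exact t.2)))
    _ ≤ ∫ s in a..b, φ s :=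
        intervalIntegral.integral_mono_interval le_rfl t.2.1 t.2.2 φ_nonneg hφ

lemma lipschitzWith_volterra {M : ℝ≥0} (h : ∀ t : Icc a b, ‖f (t, u t)‖ ≤ M) :
    LipschitzWith M (volterra hab f u) := by
  refine LipschitzWith.of_dist_le_mul fun s t => ?_
  have integrable (c : ℝ) :=
    (continuous_comp_IccExtend hab f u).intervalIntegrable (μ := volume) a c
  rw [dist_eq_norm, volterra_apply, volterra_apply,
    intervalIntegral.integral_interval_sub_left (integrable s) (integrable t), Subtype.dist_eq,
    Real.dist_eq]
  refine intervalIntegral.norm_integral_le_of_norm_le_const fun x hx => ?_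
  have x_mem : x ∈ Icc a b := uIcc_subset_Icc t.2 s.2 (uIoc_subset_uIcc hx)
  rw [IccExtend_of_mem hab u x_mem]
  exact h ⟨x, x_mem⟩

lemma apply_left_of_const_add_volterra_eq {y : E}
    (hu : ContinuousMap.const _ y + volterra hab f u = u) : u ⟨a, left_mem_Icc.2 hab⟩ = y := by
  rw [← hu, ContinuousMap.add_apply, ContinuousMap.const_apply, volterra_apply,
    intervalIntegral.integral_same, add_zero]

lemma isIntegralCurveOn_of_const_add_volterra_eq [CompleteSpace E] {y : E}
    (hu : ContinuousMap.const _ y + volterra hab f u = u) :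
    IsIntegralCurveOn (IccExtend hab u) (fun t x => f (t, x)) (Icc a b) := by
  have u_eq (t : ℝ) (ht : t ∈ Icc a b) :
      IccExtend hab u t = y + ∫ s in a..t, f (s, IccExtend hab u s) := by
    rw [IccExtend_of_mem hab u ht]
    exact DFunLike.congr_fun hu.symm ⟨t, ht⟩
  intro t ht
  exact (((continuous_comp_IccExtend hab f u).integral_hasStrictDerivAt a t).hasDerivAt.const_add
    y).hasDerivWithinAt.congr u_eq (u_eq t ht)

lemma exists_const_add_volterra_eq [FiniteDimensional ℝ E] (f : C(ℝ × E, E))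
    {Λ : C(Icc a b, E) → E} (hΛ : Continuous Λ) {r : ℝ} (hr : 0 < r)
    (boundary : ∀ u : C(Icc a b, E), ‖u‖ = r → ∀ c ∈ Ioo (0 : ℝ) 1,
      u ≠ c • (ContinuousMap.const _ (Λ (volterra hab f u)) + volterra hab f u)) :
    ∃ u, ContinuousMap.const _ (Λ (volterra hab f u)) + volterra hab f u = u := by
  obtain ⟨M, hM⟩ := ((isCompact_Icc (a := a) (b := b)).prod
    (isCompact_closedBall (0 : E) r)).exists_bound_of_continuousOn f.continuous.continuousOn
  have f_le : ∀ u ∈ Metric.closedBall (0 : C(Icc a b, E)) r, ∀ t : Icc a b,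
      ‖f (t, u t)‖ ≤ M.toNNReal := fun u hu t =>
    (hM _ ⟨t.2, mem_closedBall_zero_iff.2
      ((u.norm_coe_le_norm t).trans (mem_closedBall_zero_iff.1 hu))⟩).trans M.le_coe_toNNReal
  have shift_continuous : Continuous fun v => ContinuousMap.const (Icc a b) (Λ v) + v :=
    (ContinuousMap.continuous_const'.comp hΛ).add continuous_id
  obtain ⟨u, -, hu⟩ := exists_fixedPoint_of_leraySchauder hr
    (shift_continuous.comp (volterra hab f).continuous).continuousOn
    ((isCompact_setOf_mapsTo_lipschitzWith
      (isCompact_closedBall 0 (∫ _ in a..b, (M.toNNReal : ℝ))) M.toNNReal).image shift_continuous)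
    (fun u hu => mem_image_of_mem _ ⟨fun t => mem_closedBall_zero_iff.2
      ((ContinuousMap.norm_coe_le_norm _ t).trans
        (norm_volterra_le hab intervalIntegrable_const (f_le u hu))),
      lipschitzWith_volterra hab (f_le u hu)⟩) boundary
  exact ⟨u, hu⟩

end Volterra

/-! ### Initial value problems of linear growth -/

section InitialValue

lemma exists_eqOn_of_forall_exists_extension {α β : Type*} {s : ℕ → Set α} (s_mono : Monotone s)
    (s_cover : ∀ x, ∃ n, x ∈ s n) {P : ℕ → (α → β) → Prop}
    (extend : ∀ n F, P n F → ∃ F', P (n + 1) F' ∧ EqOn F' F (s n)) {F₀ : α → β} (h₀ : P 0 F₀) :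
    ∃ G, EqOn G F₀ (s 0) ∧ ∀ n, ∃ F, P n F ∧ EqOn G F (s n) := by
  choose next next_prop next_eqOn using extend
  let F (n : ℕ) : {F // P n F} :=
    Nat.rec ⟨F₀, h₀⟩ (fun n F => ⟨next n F.1 F.2, next_prop n F.1 F.2⟩) n
  have F_eqOn {m n : ℕ} (hmn : m ≤ n) : EqOn (F n).1 (F m).1 (s m) := by
    induction n, hmn using Nat.le_induction with
    | base => exact eqOn_refl _ _
    | succ n hmn ih => exact ((next_eqOn n _ (F n).2).mono (s_mono hmn)).trans ih
  choose index mem_index using s_cover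
  have limit_eqOn (n : ℕ) : EqOn (fun x => (F (index x)).1 x) (F n).1 (s n) := fun x hx => by
    rcases le_total n (index x) with h | h
    · exact F_eqOn h hx
    · exact (F_eqOn h (mem_index x)).symm
  exact ⟨_, limit_eqOn 0, fun n => ⟨_, (F n).2, limit_eqOn n⟩⟩

variable {E : Type*} [NormedAddCommGroup E] [NormedSpace ℝ E] {γ γ' : ℝ → E} {v : ℝ → E → E}
  {a b c : ℝ}

lemma isIntegralCurveOn_congr {s : Set ℝ} (hγ : IsIntegralCurveOn γ v s) (h : EqOn γ' γ s) :
    IsIntegralCurveOn γ' v s := fun t ht => by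
  rw [h ht]
  exact (hγ t ht).congr h (h ht)

lemma isIntegralCurveOn_union {s t : Set ℝ} (hs : IsClosed s) (ht : IsClosed t)
    (hγs : IsIntegralCurveOn γ v s) (hγt : IsIntegralCurveOn γ v t) :
    IsIntegralCurveOn γ v (s ∪ t) := by
  have deriv_within {s : Set ℝ} (hs : IsClosed s) (hγs : IsIntegralCurveOn γ v s) (x : ℝ) :
      HasDerivWithinAt γ (v x (γ x)) s x := by
    by_cases hx : x ∈ s
    · exact hγs x hx
    · exact HasFDerivWithinAt.of_notMem_closure (hs.closure_eq.symm ▸ hx)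
  exact fun x _ => (deriv_within hs hγs x).union (deriv_within ht hγt x)

lemma isIntegralCurveOn_Iic_piecewise (hab : a ≤ b) (hbc : b ≤ c)
    (hγ : IsIntegralCurveOn γ v (Icc a b)) (hγ' : IsIntegralCurveOn γ' v (Icc b c))
    (h : γ' b = γ b) : IsIntegralCurveOn ((Iic b).piecewise γ γ') v (Icc a c) := by
  have right_eq : EqOn ((Iic b).piecewise γ γ') γ' (Icc b c) := fun t ht => by
    rcases ht.1.eq_or_lt with rfl | hbt
    · rw [piecewise_eq_of_mem _ _ _ self_mem_Iic, h]
    · exact piecewise_eq_of_notMem _ _ _ hbt.not_ge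
  rw [← Icc_union_Icc_eq_Icc hab hbc]
  exact isIntegralCurveOn_union isClosed_Icc isClosed_Icc
    (isIntegralCurveOn_congr hγ fun t ht => piecewise_eq_of_mem _ _ _ ht.2)
    (isIntegralCurveOn_congr hγ' right_eq)

lemma norm_le_gronwallBound_of_isIntegralCurveOn {δ K ε : ℝ}
    (hγ : IsIntegralCurveOn γ v (Icc a b)) (h₀ : ‖γ a‖ ≤ δ)
    (bound : ∀ t ∈ Icc a b, ‖v t (γ t)‖ ≤ K * ‖γ t‖ + ε) {t : ℝ} (ht : t ∈ Icc a b) :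
    ‖γ t‖ ≤ gronwallBound δ K ε (t - a) :=
  norm_le_gronwallBound_of_norm_deriv_right_le hγ.continuousOn
    (fun s hs => (hγ s (Ico_subset_Icc_self hs)).mono_of_mem_nhdsWithin
      (Icc_mem_nhdsGE_of_mem hs))
    h₀ (fun s hs => bound s (Ico_subset_Icc_self hs)) t ht

lemma norm_smul_le_norm_of_mem_Ioo (hc : c ∈ Ioo (0 : ℝ) 1) (x : E) : ‖c • x‖ ≤ ‖x‖ := by
  rw [norm_smul, Real.norm_of_nonneg hc.1.le]
  exact mul_le_of_le_one_left (norm_nonneg x) hc.2.le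

variable [FiniteDimensional ℝ E] {f : C(ℝ × E, E)}

lemma exists_isIntegralCurveOn_Icc (hab : a ≤ b) {C : ℝ}
    (growth : ∀ t ∈ Icc a b, ∀ x, ‖f (t, x)‖ ≤ C * (‖x‖ + 1)) (y : E) :
    ∃ γ, γ a = y ∧ IsIntegralCurveOn γ (fun t x => f (t, x)) (Icc a b) := by
  have C_nonneg : 0 ≤ C := by
    simpa using (norm_nonneg _).trans (growth a (left_mem_Icc.2 hab) 0)
  have gronwall_mono := gronwallBound_mono (norm_nonneg y) C_nonneg C_nonneg
  have gronwall_nonneg : 0 ≤ gronwallBound ‖y‖ C C (b - a) :=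
    (norm_nonneg y).trans ((gronwallBound_x0 _ _ _).ge.trans (gronwall_mono (sub_nonneg.2 hab)))
  obtain ⟨u, hu⟩ := exists_const_add_volterra_eq hab f (Λ := fun _ => y) continuous_const
    (r := gronwallBound ‖y‖ C C (b - a) + 1) (by positivity) fun u norm_u c hc u_eq => by
      have u_fixed : ContinuousMap.const _ (c • y) + volterra hab (c • f) u = u := by
        rw [volterra_smul]
        exact (smul_add c _ _).symm.trans u_eq.symm
      have u_left : IccExtend hab u a = c • y :=
        (IccExtend_left hab u).trans (apply_left_of_const_add_volterra_eq hab u_fixed)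
      have norm_u_le : ‖u‖ ≤ gronwallBound ‖y‖ C C (b - a) :=
        (ContinuousMap.norm_le _ gronwall_nonneg).2 fun t => by
          rw [← IccExtend_val hab u t]
          refine (norm_le_gronwallBound_of_isIntegralCurveOn
            (isIntegralCurveOn_of_const_add_volterra_eq hab u_fixed)
            (u_left ▸ norm_smul_le_norm_of_mem_Ioo hc y)
            (fun s hs => ((norm_smul_le_norm_of_mem_Ioo hc _).trans (growth s hs _)).trans_eq
              (mul_add_one C _)) t.2).trans
            (gronwall_mono (sub_le_sub_right t.2.2 a))
      linarith
  exact ⟨IccExtend hab u, (IccExtend_left hab u).trans (apply_left_of_const_add_volterra_eq hab hu),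
    isIntegralCurveOn_of_const_add_volterra_eq hab hu⟩

lemma exists_isIntegralCurveOn_Ici_eqOn (hab : a ≤ b)
    (growth : ∀ T, ∃ C, ∀ t ∈ Icc b T, ∀ x, ‖f (t, x)‖ ≤ C * (‖x‖ + 1))
    (hγ : IsIntegralCurveOn γ (fun t x => f (t, x)) (Icc a b)) :
    ∃ γ', EqOn γ' γ (Iic b) ∧ IsIntegralCurveOn γ' (fun t x => f (t, x)) (Ici a) := by
  have endpoint_lt (t : ℝ) : ∃ n : ℕ, t < b + n :=
    (exists_nat_gt (t - b)).imp fun n => sub_lt_iff_lt_add'.1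
  have endpoint_le (n : ℕ) : b ≤ b + n := le_add_of_nonneg_right n.cast_nonneg
  obtain ⟨γ', γ'_eqOn, hγ'⟩ := exists_eqOn_of_forall_exists_extension
    (s := fun n : ℕ => Iic (b + n))
    (P := fun n γ => IsIntegralCurveOn γ (fun t x => f (t, x)) (Icc a (b + n)))
    (fun m n hmn => Iic_subset_Iic.2 (by gcongr)) (fun t => (endpoint_lt t).imp fun n => le_of_lt)
    (fun n F hF => by
      obtain ⟨C, hC⟩ := growth (b + (n + 1 : ℕ))
      have step : b + n ≤ b + (n + 1 : ℕ) := by gcongr; exact n.le_succ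
      obtain ⟨F', F'_left, hF'⟩ := exists_isIntegralCurveOn_Icc step
        (fun t ht => hC t ⟨(endpoint_le n).trans ht.1, ht.2⟩) (F (b + n))
      exact ⟨_, isIntegralCurveOn_Iic_piecewise (hab.trans (endpoint_le n)) step hF hF' F'_left,
        piecewise_eqOn _ _ _⟩)
    (F₀ := γ) (by simpa using hγ)
  refine ⟨γ', by simpa using γ'_eqOn, fun t ht => ?_⟩
  obtain ⟨n, htn⟩ := endpoint_lt t
  obtain ⟨F, hF, γ'_eqOn_F⟩ := hγ' n
  have Icc_mem : Icc a (b + n) ∈ 𝓝[Ici a] t :=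
    inter_mem self_mem_nhdsWithin (mem_nhdsWithin_of_mem_nhds (Iic_mem_nhds htn))
  exact (isIntegralCurveOn_congr hF (γ'_eqOn_F.mono fun s hs => hs.2) t
    ⟨ht, htn.le⟩).mono_of_mem_nhdsWithin Icc_mem

end InitialValue

/-! ### Nonlocal initial conditions -/

section Nonlocal

variable {E : Type*} [NormedAddCommGroup E] [NormedSpace ℝ E] {a b : ℝ} {A : ℝ → ℝ} {B : ℝ}

lemma norm_volterra_le_integral_mul_norm_add (hab : a ≤ b) {f : C(ℝ × E, E)}
    (A_nonneg : ∀ t ∈ Icc a b, 0 ≤ A t) (hA : IntervalIntegrable A volume a b)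
    (growth : ∀ t ∈ Icc a b, ∀ x, ‖f (t, x)‖ ≤ A t * ‖x‖ + B) (u : C(Icc a b, E)) :
    ‖volterra hab f u‖ ≤ (∫ t in a..b, A t) * ‖u‖ + B * (b - a) := by
  calc ‖volterra hab f u‖ ≤ ∫ t in a..b, (A t * ‖u‖ + B) :=
        norm_volterra_le hab ((hA.mul_const _).add intervalIntegrable_const) fun t =>
          (growth t t.2 _).trans (by gcongr; exacts [A_nonneg t t.2, u.norm_coe_le_norm t])
    _ = (∫ t in a..b, A t) * ‖u‖ + B * (b - a) := by
        rw [intervalIntegral.integral_add (hA.mul_const _) intervalIntegrable_const,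
          intervalIntegral.integral_mul_const, intervalIntegral.integral_const, smul_eq_mul,
          mul_comm B]

variable [FiniteDimensional ℝ E]

-- For a solution `u`, the Volterra integral of `u` is `u - const (u a)`. Since `P` inverts
-- `1 - L ∘ const`, the condition `u a = L u` therefore reads `u a = P (L (volterra hab f u))`.
lemma exists_isIntegralCurveOn_Icc_apply_left_eq (hab : a ≤ b) {f : C(ℝ × E, E)}
    (L : C(Icc a b, E) →L[ℝ] E) (P : E →L[ℝ] E)
    (hP : ∀ y, P y - L (ContinuousMap.const _ (P y)) = y)
    (A_nonneg : ∀ t ∈ Icc a b, 0 ≤ A t) (hA : IntervalIntegrable A volume a b)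
    (growth : ∀ t ∈ Icc a b, ∀ x, ‖f (t, x)‖ ≤ A t * ‖x‖ + B)
    (small : (‖P ∘L L‖ + 1) * ∫ t in a..b, A t < 1) :
    ∃ u : C(Icc a b, E), u ⟨a, left_mem_Icc.2 hab⟩ = L u ∧
      IsIntegralCurveOn (IccExtend hab u) (fun t x => f (t, x)) (Icc a b) := by
  set κ := ‖P ∘L L‖ + 1
  set I := ∫ t in a..b, A t
  have B_nonneg : 0 ≤ B := by
    simpa using (norm_nonneg _).trans (growth a (left_mem_Icc.2 hab) 0)
  have one_sub_pos : 0 < 1 - κ * I := sub_pos.2 small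
  have : 0 ≤ b - a := sub_nonneg.2 hab
  let r := (κ * (B * (b - a)) + 1) / (1 - κ * I)
  have r_eq : κ * (I * r + B * (b - a)) + 1 = r := by
    simp only [r]
    field_simp
    ring
  obtain ⟨u, hu⟩ := exists_const_add_volterra_eq hab f (P ∘L L).continuous (r := r) (by positivity)
    fun u norm_u c hc u_eq => by
      set w := volterra hab f u
      have norm_u_le : ‖u‖ ≤ κ * (I * r + B * (b - a)) :=
        calc ‖u‖ ≤ ‖ContinuousMap.const _ ((P ∘L L) w) + w‖ :=
              (congrArg norm u_eq).trans_le
                (norm_smul_le_norm_of_mem_Ioo (E := C(Icc a b, E)) hc _)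
          _ ≤ ‖(P ∘L L) w‖ + ‖w‖ := (norm_add_le _ _).trans
              (add_le_add_left ((ContinuousMap.norm_le _ (norm_nonneg _)).2 fun _ => le_rfl) _)
          _ ≤ κ * ‖w‖ := by
              rw [add_one_mul]
              gcongr
              exact (P ∘L L).le_opNorm w
          _ ≤ κ * (I * r + B * (b - a)) := by
              gcongr
              exact norm_u ▸ norm_volterra_le_integral_mul_norm_add hab A_nonneg hA growth u
      linarith
  refine ⟨u, ?_, isIntegralCurveOn_of_const_add_volterra_eq hab hu⟩
  rw [apply_left_of_const_add_volterra_eq hab hu]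
  conv_rhs => rw [← hu, map_add]
  exact sub_eq_iff_eq_add'.1 (hP _)

end Nonlocal

theorem statement_13_general {E : Type*} [NormedAddCommGroup E] [NormedSpace ℝ E]
    [FiniteDimensional ℝ E] {t₀ : ℝ} (ht₀ : 0 ≤ t₀) {f : ℝ → E → E}
    (hf : ContinuousOn (fun q : ℝ × E => f q.1 q.2) (Ici 0 ×ˢ univ))
    (L : C(Icc 0 t₀, E) →L[ℝ] E) (P : E →L[ℝ] E)
    (hP : ∀ y, P y - L (ContinuousMap.const _ (P y)) = y) {A : ℝ → ℝ} {B : ℝ}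
    (A_nonneg : ∀ t ∈ Icc 0 t₀, 0 ≤ A t) (hA : IntervalIntegrable A volume 0 t₀)
    (growth : ∀ t ∈ Icc 0 t₀, ∀ x, ‖f t x‖ ≤ A t * ‖x‖ + B)
    (growth_after : ∀ T, ∃ C, ∀ t ∈ Icc t₀ T, ∀ x, ‖f t x‖ ≤ C * (‖x‖ + 1))
    (small : (‖P ∘L L‖ + 1) * ∫ t in 0..t₀, A t < 1) :
    ∃ (x : ℝ → E) (hx : ContinuousOn x (Icc 0 t₀)),
      (∀ t, 0 ≤ t → HasDerivWithinAt x (f t (x t)) (Ici 0) t) ∧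
      x 0 = L ⟨(Icc 0 t₀).domRestrict x, hx.domRestrict⟩ := by
  let F : C(ℝ × E, E) := ⟨fun q => f (max q.1 0) q.2, hf.comp_continuous
    (f := fun q : ℝ × E => (max q.1 0, q.2)) (by fun_prop)
    fun q => ⟨le_max_right q.1 0, mem_univ q.2⟩⟩
  have F_eq {t : ℝ} (ht : 0 ≤ t) (x : E) : F (t, x) = f t x := by
    simp only [F, ContinuousMap.coe_mk, max_eq_left ht]
  obtain ⟨u, u_left, hu⟩ := exists_isIntegralCurveOn_Icc_apply_left_eq ht₀ (f := F) L P hP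
    A_nonneg hA (fun t ht x => by rw [F_eq ht.1]; exact growth t ht x) small
  obtain ⟨x, x_eqOn, hx⟩ := exists_isIntegralCurveOn_Ici_eqOn ht₀ (fun T =>
    (growth_after T).imp fun C hC t ht x => by rw [F_eq (ht₀.trans ht.1)]; exact hC t ht x) hu
  have x_eq (t : Icc 0 t₀) : x t = u t := (x_eqOn t.2.2).trans (IccExtend_val ht₀ u t)
  refine ⟨x, (hx.mono Icc_subset_Ici_self).continuousOn,
    fun t ht => F_eq ht (x t) ▸ hx t ht, ?_⟩
  rw [x_eq ⟨0, left_mem_Icc.2 ht₀⟩, u_left]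
  exact congrArg L (ContinuousMap.ext fun t => (x_eq t).symm)

section Coordinatewise

variable {ι α : Type*} [TopologicalSpace α]

/-- The coordinatewise action `x ↦ (⟨η n, x n⟩)ₙ` of a family of functionals on vector-valued
continuous functions. -/
def piFunctional (η : ι → C(α, ℝ) →L[ℝ] ℝ) : C(α, ι → ℝ) →L[ℝ] (ι → ℝ) :=
  ContinuousLinearMap.pi fun n => η n ∘L (ContinuousLinearMap.proj n).compLeftContinuous ℝ α

lemma mul_inv_sub_piFunctional_const {η : ι → C(α, ℝ) →L[ℝ] ℝ} (hη : ∀ n, η n 1 ≠ 1)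
    (y : ι → ℝ) :
    (fun n => (1 - η n 1)⁻¹) * y -
      piFunctional η (ContinuousMap.const α ((fun n => (1 - η n 1)⁻¹) * y)) = y := by
  ext n
  have const_eq : ContinuousMap.const α ((1 - η n 1)⁻¹ * y n) = ((1 - η n 1)⁻¹ * y n) • 1 := by
    ext
    simp
  have η_const : piFunctional η (ContinuousMap.const α ((fun n => (1 - η n 1)⁻¹) * y)) n =
      (1 - η n 1)⁻¹ * y n * η n 1 :=
    (congrArg (η n) const_eq).trans (map_smul _ _ _)
  rw [Pi.sub_apply, η_const, Pi.mul_apply]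
  have := sub_ne_zero.2 (hη n).symm
  field_simp

lemma norm_piFunctional_le [Fintype ι] [CompactSpace α] (η : ι → C(α, ℝ) →L[ℝ] ℝ) :
    ‖piFunctional η‖ ≤ ‖fun n => ‖η n‖‖ := by
  refine ContinuousLinearMap.opNorm_le_bound _ (norm_nonneg _) fun x =>
    (pi_norm_le_iff_of_nonneg (by positivity)).2 fun n => ?_
  calc ‖piFunctional η x n‖
      ≤ ‖η n‖ * ‖(ContinuousLinearMap.proj (R := ℝ) n).compLeftContinuous ℝ α x‖ :=
        (η n).le_opNorm _
    _ ≤ ‖fun n => ‖η n‖‖ * ‖x‖ := by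
        gcongr
        · exact (norm_norm (η n)).ge.trans (norm_le_pi_norm (fun n => ‖η n‖) n)
        · exact (ContinuousMap.norm_le _ (norm_nonneg x)).2 fun t =>
            (norm_le_pi_norm (x t) n).trans (x.norm_coe_le_norm t)

lemma norm_mul_comp_piFunctional_le [Fintype ι] [CompactSpace α] (c : ι → ℝ)
    (η : ι → C(α, ℝ) →L[ℝ] ℝ) :
    ‖ContinuousLinearMap.mul ℝ (ι → ℝ) c ∘L piFunctional η‖ ≤ ‖c‖ * ‖fun n => ‖η n‖‖ :=
  (ContinuousLinearMap.opNorm_comp_le _ _).trans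
    (mul_le_mul (ContinuousLinearMap.opNorm_mul_apply_le _ _ _) (norm_piFunctional_le η)
      (norm_nonneg _) (norm_nonneg _))

end Coordinatewise

lemma semF_eq_norm {N : ℕ} (y : Fin N → ℝ) : semF y = ‖y‖ :=
  le_antisymm (Real.iSup_le (norm_le_pi_norm y) (norm_nonneg y))
    ((pi_norm_le_iff_of_nonneg (Real.iSup_nonneg fun i => abs_nonneg (y i))).2
      (le_ciSup (finite_range fun i => |y i|).bddAbove))

/-- Theorem 3.3: existence for a finite system of `N` first order equations on `J = [0,∞)`
with nonlocal initial conditions. -/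
theorem statement_13
    (N : ℕ) (hN : 0 < N)
    (t₀ : ℝ) (ht₀ : 0 < t₀)
    (g : Fin N → ℝ → (Fin N → ℝ) → ℝ)
    (hg : ∀ n, ContinuousOn (fun q : ℝ × (Fin N → ℝ) => g n q.1 q.2)
      (Set.Ici (0:ℝ) ×ˢ (Set.univ : Set (Fin N → ℝ))))
    (η : Fin N → C(Set.Icc (0:ℝ) t₀, ℝ) →L[ℝ] ℝ)
    (hη : ∀ n, η n 1 ≠ 1)
    (ts : ℕ → ℝ) (hts : StrictMono ts) (hts0 : t₀ < ts 0)
    (htsTop : Filter.Tendsto ts Filter.atTop Filter.atTop)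
    (A : ℝ → ℝ) (B : ℝ) (C : ℕ → ℝ)
    (hA_nonneg : ∀ t ∈ Set.Icc (0:ℝ) t₀, 0 ≤ A t)
    (hA_int : IntervalIntegrable A MeasureTheory.volume 0 t₀)
    (hB : 0 ≤ B) (hC : ∀ p, 0 ≤ C p)
    (hgrowth1 : ∀ t ∈ Set.Icc (0:ℝ) t₀, ∀ x : Fin N → ℝ,
      semF (fun n => g n t x) ≤ A t * semF x + B)
    (hgrowth2 : ∀ p : ℕ, ∀ t ∈ Set.Icc t₀ (ts p), ∀ x : Fin N → ℝ,
      semF (fun n => g n t x) ≤ C p * (semF x + 1))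
    (hsmall : (semF (fun n => (1 - η n 1)⁻¹) * semF (fun n => ‖η n‖) + 1) *
      (∫ t in (0:ℝ)..t₀, A t) < 1) :
    ∃ (x : Fin N → ℝ → ℝ) (hc : ∀ n, ContinuousOn (x n) (Set.Icc (0:ℝ) t₀)),
      (∀ n : Fin N, ∀ t : ℝ, 0 ≤ t →
        HasDerivWithinAt (x n) (g n t (fun m => x m t)) (Set.Ici (0:ℝ)) t) ∧
      (∀ n : Fin N, x n 0 = η n (ContinuousMap.mk ((Set.Icc (0:ℝ) t₀).restrict (x n))
        ((hc n).restrict))) := by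
  simp only [semF_eq_norm] at hgrowth1 hgrowth2 hsmall
  have integral_nonneg : 0 ≤ ∫ t in (0 : ℝ)..t₀, A t :=
    intervalIntegral.integral_nonneg ht₀.le hA_nonneg
  obtain ⟨x, hc, hx, hx₀⟩ := statement_13_general ht₀.le (continuousOn_pi.2 hg)
    (piFunctional η) (.mul ℝ _ _) (mul_inv_sub_piFunctional_const hη) hA_nonneg hA_int hgrowth1
    (fun T =>
      let ⟨p, hp⟩ := (htsTop.eventually_ge_atTop T).exists
      ⟨C p, fun t ht => hgrowth2 p t ⟨ht.1, ht.2.trans hp⟩⟩)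
    (lt_of_le_of_lt (by gcongr; exact norm_mul_comp_piFunctional_le _ η) hsmall)
  exact ⟨fun n t => x t n, fun n => continuousOn_pi.1 hc n,
    fun n t ht => hasDerivWithinAt_pi.1 (hx t ht) n, congrFun hx₀⟩
end
end

section
/- (Example.) Fix t₀ ∈ (0,∞) and let k = (k_1,k_2,…) be a real sequence satisfying |k_n| < 1/((1+t₀)·arctan t₀) for every n ∈ ℕ. Then the infinite system x_n'(t) = (k_n/(1+t²))·x_n(t) + t·cos(x_{n+1}(t)), t ∈ [0,∞), with nonlocal initial conditions x_n(0) = (1/(n+t₀))·∫₀^{t₀} x_n(s) ds (n ∈ ℕ), has at least one solution, i.e. there exist differentiable functions x_n : [0,∞) → ℝ (n ∈ ℕ) satisfying all the equations and initial conditions. -/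
open Set MeasureTheory

noncomputable section

/-!
The `n`-th equation only involves `x n` and `x (n + 1)`. For a given `y` in place of `x (n + 1)` it
is a linear problem, and it has a solution `S n y` as soon as the nonlocal condition is not
resonant, i.e. `c n * ∫ s in 0..T n, exp (∫ r in 0..s, a n r) ≠ 1`. So one needs a sequence with
`x n = S n (x (n + 1))` for all `n`. Truncated at any finite level, such a sequence is obtained by
backward recursion from an arbitrary function. Since the forcing terms are dominated, `S n` has
relatively compact range by Arzelà–Ascoli, and Tychonoff's theorem gives a point common to the
decreasing compact sets of truncated solutions. The bound on `k n` makes the integral of the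
integrating factor `exp (k n * arctan s)` smaller than `1 + t₀`, which rules out resonance.
-/

section InverseSequence

theorem exists_forall_lt_eq_apply_succ {X : ℕ → Type*} [∀ n, Nonempty (X n)]
    (T : ∀ n, X (n + 1) → X n) (N : ℕ) :
    ∃ x : ∀ n, X n, (∀ n, x n ∈ range (T n)) ∧ ∀ n < N, x n = T n (x (n + 1)) := by
  induction N generalizing X with
  | zero => exact ⟨fun n ↦ T n (Classical.arbitrary _), fun n ↦ mem_range_self _, by simp⟩
  | succ N ih =>
    obtain ⟨y, hy_mem, hy⟩ := ih (X := fun n ↦ X (n + 1)) fun n ↦ T (n + 1)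
    refine ⟨fun n ↦ Nat.casesOn n (T 0 (y 0)) y, ?_, ?_⟩
    · rintro (_ | n)
      exacts [mem_range_self _, hy_mem n]
    · rintro (_ | n) hn
      exacts [rfl, hy n (Nat.lt_of_succ_lt_succ hn)]

theorem exists_forall_eq_apply_succ {X : ℕ → Type*} [∀ n, TopologicalSpace (X n)]
    [∀ n, T2Space (X n)] [∀ n, Nonempty (X n)] {T : ∀ n, X (n + 1) → X n}
    (hT : ∀ n, Continuous (T n)) (hc : ∀ n, IsCompact (closure (range (T n)))) :
    ∃ x : ∀ n, X n, ∀ n, x n = T n (x (n + 1)) := by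
  let P : Set (∀ n, X n) := univ.pi fun n ↦ closure (range (T n))
  let S (N : ℕ) : Set (∀ n, X n) := P ∩ {x | ∀ n < N, x n = T n (x (n + 1))}
  have hP : IsCompact P := isCompact_univ_pi hc
  have hS_closed (N : ℕ) : IsClosed (S N) := by
    refine hP.isClosed.inter ?_
    simp only [ofPred_forall]
    exact isClosed_iInter fun n ↦ isClosed_iInter fun _ ↦
      isClosed_eq (continuous_apply n) ((hT n).comp (continuous_apply (n + 1)))
  have hS_anti (N : ℕ) : S (N + 1) ⊆ S N :=
    inter_subset_inter_right _ fun x hx n hn ↦ hx n (Nat.lt_succ_of_lt hn)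
  have hS_nonempty (N : ℕ) : (S N).Nonempty := by
    obtain ⟨x, hx_mem, hx⟩ := exists_forall_lt_eq_apply_succ T N
    exact ⟨x, fun n _ ↦ subset_closure (hx_mem n), hx⟩
  obtain ⟨x, hx⟩ := IsCompact.nonempty_iInter_of_sequence_nonempty_isCompact_isClosed S hS_anti
    hS_nonempty (hP.of_isClosed_subset (hS_closed 0) inter_subset_left) hS_closed
  exact ⟨x, fun n ↦ (mem_iInter.1 hx (n + 1)).2 n n.lt_succ_self⟩

end InverseSequence

theorem isCompact_closure_of_equicontinuous {X Y : Type*} [TopologicalSpace X]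
    [CompactlyCoherentSpace X] [UniformSpace Y] [T2Space Y] {S : Set C(X, Y)}
    (hS : Equicontinuous ((↑) : S → X → Y))
    (hc : ∀ x, ∃ K, IsCompact K ∧ ∀ f ∈ S, f x ∈ K) : IsCompact (closure S) := by
  refine ArzelaAscoli.isCompact_closure_of_isClosedEmbedding (F := ((⇑) : C(X, Y) → X → Y))
    (𝔖 := {K | IsCompact K}) (fun _ ↦ id) ⟨?_, ?_⟩ (fun K _ ↦ hS.equicontinuousOn K)
    fun _ _ x _ ↦ hc x
  · exact ContinuousMap.isUniformEmbedding_toUniformOnFunIsCompact.isEmbedding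
  · change IsClosed (range ContinuousMap.toUniformOnFunIsCompact)
    rw [ContinuousMap.range_toUniformOnFunIsCompact]
    exact UniformOnFun.isClosed_setOfPred_continuous CompactlyCoherentSpace.isCoherentWith

variable {E : Type*} [NormedAddCommGroup E] [NormedSpace ℝ E]

section Primitive

/-- The primitive of a continuous function that vanishes at `0`, as an operator on `C(ℝ, E)`. -/
def primitive (h : C(ℝ, E)) : C(ℝ, E) where
  toFun t := ∫ s in (0 : ℝ)..t, h s
  continuous_toFun :=
    intervalIntegral.continuous_primitive (fun _ _ ↦ h.continuous.intervalIntegrable _ _) 0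

theorem primitive_apply (h : C(ℝ, E)) (t : ℝ) : primitive h t = ∫ s in (0 : ℝ)..t, h s := rfl

@[simp]
theorem primitive_zero (h : C(ℝ, E)) : primitive h 0 = 0 := intervalIntegral.integral_same

theorem hasDerivAt_primitive [CompleteSpace E] (h : C(ℝ, E)) (t : ℝ) :
    HasDerivAt (primitive h) (h t) t :=
  h.continuous.integral_hasStrictDerivAt 0 t |>.hasDerivAt

theorem continuous_primitive : Continuous (primitive : C(ℝ, E) → C(ℝ, E)) :=
  ContinuousMap.continuous_of_continuous_uncurry _ <|
    intervalIntegral.continuous_parametric_primitive_of_continuous (by fun_prop)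

theorem norm_primitive_sub_le {h : C(ℝ, E)} {g : C(ℝ, ℝ)} (hg : ∀ t, ‖h t‖ ≤ g t) (s t : ℝ) :
    ‖primitive h s - primitive h t‖ ≤ |primitive g s - primitive g t| := by
  simp only [primitive_apply]
  rw [intervalIntegral.integral_interval_sub_left (h.continuous.intervalIntegrable _ _)
      (h.continuous.intervalIntegrable _ _),
    intervalIntegral.integral_interval_sub_left (g.continuous.intervalIntegrable _ _)
      (g.continuous.intervalIntegrable _ _)]
  exact intervalIntegral.norm_integral_le_abs_of_norm_le (.of_forall hg)
    (g.continuous.intervalIntegrable _ _)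

theorem isCompact_closure_image_primitive [ProperSpace E] (g : C(ℝ, ℝ)) :
    IsCompact (closure (primitive '' {h : C(ℝ, E) | ∀ t, ‖h t‖ ≤ g t})) := by
  refine isCompact_closure_of_equicontinuous (fun t ↦ ?_) fun t ↦
    ⟨Metric.closedBall 0 |primitive g t|, isCompact_closedBall _ _, ?_⟩
  · refine Metric.equicontinuousAt_of_continuity_modulus
      (fun s ↦ |primitive g t - primitive g s|) ?_ _ (.of_forall ?_)
    · have hcont : Continuous fun s ↦ |primitive g t - primitive g s| := by fun_prop
      simpa using hcont.tendsto t
    · rintro s ⟨_, h, hg, rfl⟩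
      exact (dist_eq_norm _ _).trans_le (norm_primitive_sub_le hg t s)
  · rintro _ ⟨h, hg, rfl⟩
    simpa using norm_primitive_sub_le hg t 0

end Primitive

section LinearProblem

/-- The integrating factor `t ↦ exp (∫ s in 0..t, a s)` of the linear equation `x' = a x + h`. -/
def expPrimitive (a : C(ℝ, ℝ)) : C(ℝ, ℝ) where
  toFun t := Real.exp (primitive a t)

theorem expPrimitive_apply (a : C(ℝ, ℝ)) (t : ℝ) :
    expPrimitive a t = Real.exp (primitive a t) := rfl

@[simp]
theorem expPrimitive_zero (a : C(ℝ, ℝ)) : expPrimitive a 0 = 1 := by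
  simp [expPrimitive_apply]

theorem expPrimitive_pos (a : C(ℝ, ℝ)) (t : ℝ) : 0 < expPrimitive a t := Real.exp_pos _

theorem expPrimitive_neg (a : C(ℝ, ℝ)) (t : ℝ) : expPrimitive (-a) t = (expPrimitive a t)⁻¹ := by
  simp [expPrimitive_apply, primitive_apply, Real.exp_neg]

theorem hasDerivAt_expPrimitive (a : C(ℝ, ℝ)) (t : ℝ) :
    HasDerivAt (expPrimitive a) (expPrimitive a t * a t) t :=
  (hasDerivAt_primitive a t).exp

/-- The initial value for which `t ↦ expPrimitive a t • (ξ + p t)` satisfies the nonlocal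
condition `x 0 = c • ∫ s in 0..T, x s`, when `p 0 = 0` and `c * ∫ s in 0..T, expPrimitive a s ≠ 1`.
-/
def nonlocalInitialValue (a : C(ℝ, ℝ)) (c T : ℝ) (p : C(ℝ, E)) : E :=
  (c / (1 - c * ∫ s in (0 : ℝ)..T, expPrimitive a s)) •
    ∫ s in (0 : ℝ)..T, expPrimitive a s • p s

/-- The variation of constants formula for `x' = a x + h`, `x 0 = c • ∫ s in 0..T, x s`. The
forcing term enters through `p`, the primitive of `exp (-∫ a) • h`, so that the operator is
continuous in `p` and compactness can be gained from `primitive` alone. -/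
def nonlocalSolution (a : C(ℝ, ℝ)) (c T : ℝ) (p : C(ℝ, E)) : C(ℝ, E) where
  toFun t := expPrimitive a t • (nonlocalInitialValue a c T p + p t)

theorem nonlocalSolution_apply (a : C(ℝ, ℝ)) (c T : ℝ) (p : C(ℝ, E)) (t : ℝ) :
    nonlocalSolution a c T p t = expPrimitive a t • (nonlocalInitialValue a c T p + p t) := rfl

theorem continuous_nonlocalSolution (a : C(ℝ, ℝ)) (c T : ℝ) :
    Continuous (nonlocalSolution a c T : C(ℝ, E) → C(ℝ, E)) := by
  have hξ : Continuous (nonlocalInitialValue a c T : C(ℝ, E) → E) :=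
    (intervalIntegral.continuous_parametric_intervalIntegral_of_continuous' (by fun_prop)
      0 T).const_smul _
  refine ContinuousMap.continuous_of_continuous_uncurry _ ?_
  change Continuous fun q : C(ℝ, E) × ℝ ↦
    expPrimitive a q.2 • (nonlocalInitialValue a c T q.1 + q.1 q.2)
  fun_prop

theorem nonlocalSolution_zero [CompleteSpace E] {a : C(ℝ, ℝ)} {c T : ℝ}
    (hne : c * ∫ s in (0 : ℝ)..T, expPrimitive a s ≠ 1) {p : C(ℝ, E)} (hp : p 0 = 0) :
    nonlocalSolution a c T p 0 = c • ∫ s in (0 : ℝ)..T, nonlocalSolution a c T p s := by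
  set ξ := nonlocalInitialValue a c T p with hξ
  set I := ∫ s in (0 : ℝ)..T, expPrimitive a s
  set J := ∫ s in (0 : ℝ)..T, expPrimitive a s • p s
  have hξ_eq : (1 - c * I) • ξ = c • J := by
    rw [hξ, nonlocalInitialValue, smul_smul, mul_div_cancel₀ _ (sub_ne_zero.2 hne.symm)]
  have hint : ∫ s in (0 : ℝ)..T, nonlocalSolution a c T p s = I • ξ + J := by
    simp only [nonlocalSolution_apply, smul_add, ← hξ]
    rw [intervalIntegral.integral_add (Continuous.intervalIntegrable (by fun_prop) _ _)
      (Continuous.intervalIntegrable (by fun_prop) _ _), intervalIntegral.integral_smul_const]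
  calc nonlocalSolution a c T p 0 = ξ := by simp [nonlocalSolution_apply, hp, hξ]
    _ = (c * I) • ξ + (1 - c * I) • ξ := by rw [← add_smul, add_sub_cancel, one_smul]
    _ = c • ∫ s in (0 : ℝ)..T, nonlocalSolution a c T p s := by
      rw [hξ_eq, hint, smul_add, smul_smul]

theorem hasDerivAt_nonlocalSolution (a : C(ℝ, ℝ)) (c T : ℝ) {p : C(ℝ, E)} {t : ℝ} {v : E}
    (hp : HasDerivAt p (expPrimitive (-a) t • v) t) :
    HasDerivAt (nonlocalSolution a c T p) (a t • nonlocalSolution a c T p t + v) t := by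
  have hd := (hasDerivAt_expPrimitive a t).smul (hp.const_add (nonlocalInitialValue a c T p))
  refine hd.congr_deriv ?_
  rw [expPrimitive_neg, smul_inv_smul₀ (expPrimitive_pos a t).ne', nonlocalSolution_apply,
    smul_smul, mul_comm, add_comm]

end LinearProblem

section NonlinearSystem

/-- The superposition operator `y ↦ exp (-∫ a) • f (·, y ·)`, whose primitive is the input of
`nonlocalSolution a` for the equation `x' = a x + f (·, y ·)`. -/
def scaledForcing (a : C(ℝ, ℝ)) (f : C(ℝ × E, E)) (y : C(ℝ, E)) : C(ℝ, E) :=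
  expPrimitive (-a) • f.comp ((ContinuousMap.id ℝ).prodMk y)

theorem scaledForcing_apply (a : C(ℝ, ℝ)) (f : C(ℝ × E, E)) (y : C(ℝ, E)) (t : ℝ) :
    scaledForcing a f y t = expPrimitive (-a) t • f (t, y t) := rfl

theorem continuous_scaledForcing (a : C(ℝ, ℝ)) (f : C(ℝ × E, E)) :
    Continuous (scaledForcing a f) := by
  refine ContinuousMap.continuous_of_continuous_uncurry _ ?_
  change Continuous fun q : C(ℝ, E) × ℝ ↦ expPrimitive (-a) q.2 • f (q.2, q.1 q.2)
  fun_prop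

theorem norm_scaledForcing_le {a g : C(ℝ, ℝ)} {f : C(ℝ × E, E)}
    (hfg : ∀ t u, ‖f (t, u)‖ ≤ g t) (y : C(ℝ, E)) (t : ℝ) :
    ‖scaledForcing a f y t‖ ≤ (expPrimitive (-a) * g) t := by
  have hpos := expPrimitive_pos (-a) t
  rw [scaledForcing_apply, norm_smul, Real.norm_of_nonneg hpos.le]
  exact mul_le_mul_of_nonneg_left (hfg t (y t)) hpos.le

theorem exists_forall_hasDerivAt_and_eq_smul_integral [ProperSpace E] {a : ℕ → C(ℝ, ℝ)}
    {f : ℕ → C(ℝ × E, E)} {g : ℕ → C(ℝ, ℝ)} (hfg : ∀ n t u, ‖f n (t, u)‖ ≤ g n t)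
    {c T : ℕ → ℝ} (hne : ∀ n, c n * ∫ s in (0 : ℝ)..T n, expPrimitive (a n) s ≠ 1) :
    ∃ x : ℕ → C(ℝ, E), ∀ n,
      (∀ t, HasDerivAt (x n) (a n t • x n t + f n (t, x (n + 1) t)) t) ∧
      x n 0 = c n • ∫ s in (0 : ℝ)..T n, x n s := by
  let p (n : ℕ) (y : C(ℝ, E)) : C(ℝ, E) := primitive (scaledForcing (a n) (f n) y)
  let S (n : ℕ) (y : C(ℝ, E)) : C(ℝ, E) := nonlocalSolution (a n) (c n) (T n) (p n y)
  have hS (n : ℕ) : Continuous (S n) :=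
    (continuous_nonlocalSolution _ _ _).comp
      (continuous_primitive.comp (continuous_scaledForcing _ _))
  have hS_compact (n : ℕ) : IsCompact (closure (range (S n))) := by
    refine ((isCompact_closure_image_primitive (expPrimitive (-a n) * g n)).image
      (continuous_nonlocalSolution (a n) (c n) (T n))).closure_of_subset ?_
    rintro _ ⟨y, rfl⟩
    exact mem_image_of_mem _ (subset_closure ⟨_, norm_scaledForcing_le (hfg n) y, rfl⟩)
  obtain ⟨x, hx⟩ := exists_forall_eq_apply_succ hS hS_compact
  refine ⟨x, fun n ↦ ⟨fun t ↦ ?_, ?_⟩⟩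
  · rw [hx n]
    exact hasDerivAt_nonlocalSolution _ _ _ (hasDerivAt_primitive _ t)
  · rw [hx n]
    exact nonlocalSolution_zero (hne n) (primitive_zero _)

end NonlinearSystem

section ArctanWeight

/-- The coefficient `t ↦ κ / (1 + t ^ 2)` of the linear part of the system. -/
def divOneAddSq (κ : ℝ) : C(ℝ, ℝ) where
  toFun t := κ / (1 + t ^ 2)
  continuous_toFun := by
    have (t : ℝ) : 1 + t ^ 2 ≠ 0 := by positivity
    fun_prop (disch := assumption)

theorem expPrimitive_divOneAddSq (κ t : ℝ) :
    expPrimitive (divOneAddSq κ) t = Real.exp (κ * Real.arctan t) := by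
  have hcoe (s : ℝ) : divOneAddSq κ s = κ * (1 / (1 + s ^ 2)) := (mul_one_div _ _).symm
  simp only [expPrimitive_apply, primitive_apply, hcoe, intervalIntegral.integral_const_mul,
    integral_one_div_one_add_sq, Real.arctan_zero, sub_zero]

theorem mul_exp_one_div_one_add_lt {T : ℝ} (hT : 0 < 1 + T) :
    T * Real.exp (1 / (1 + T)) < 1 + T := by
  have hexp : 1 - 1 / (1 + T) < (Real.exp (1 / (1 + T)))⁻¹ := by
    rw [← Real.exp_neg, sub_eq_neg_add]
    exact Real.add_one_lt_exp (neg_ne_zero.2 (one_div_pos.2 hT).ne')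
  rw [one_sub_div hT.ne', add_sub_cancel_left, div_lt_iff₀ hT, inv_mul_eq_div,
    lt_div_iff₀ (Real.exp_pos _)] at hexp
  exact hexp

theorem integral_exp_mul_arctan_lt {κ T : ℝ} (hT : 0 < T)
    (hκ : κ ≤ 1 / ((1 + T) * Real.arctan T)) :
    ∫ s in (0 : ℝ)..T, Real.exp (κ * Real.arctan s) < 1 + T := by
  have harctan : 0 < Real.arctan T := Real.arctan_pos.2 hT
  have hbound : 0 ≤ 1 / ((1 + T) * Real.arctan T) :=
    one_div_nonneg.2 (mul_nonneg (by positivity) harctan.le)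
  have hexponent (s : ℝ) (hs : s ∈ Icc 0 T) : κ * Real.arctan s ≤ 1 / (1 + T) :=
    calc κ * Real.arctan s ≤ 1 / ((1 + T) * Real.arctan T) * Real.arctan s :=
          mul_le_mul_of_nonneg_right hκ (Real.arctan_nonneg.2 hs.1)
      _ ≤ 1 / ((1 + T) * Real.arctan T) * Real.arctan T :=
          mul_le_mul_of_nonneg_left (Real.arctan_mono hs.2) hbound
      _ = 1 / (1 + T) := by
          rw [one_div_mul_eq_div, div_mul_cancel_right₀ harctan.ne', one_div]
  have hcont : Continuous fun s ↦ Real.exp (κ * Real.arctan s) := by fun_prop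
  calc ∫ s in (0 : ℝ)..T, Real.exp (κ * Real.arctan s)
      ≤ ∫ _ in (0 : ℝ)..T, Real.exp (1 / (1 + T)) :=
        intervalIntegral.integral_mono_on hT.le (hcont.intervalIntegrable _ _)
          intervalIntegrable_const fun s hs ↦ Real.exp_le_exp.2 (hexponent s hs)
    _ = T * Real.exp (1 / (1 + T)) := by simp
    _ < 1 + T := mul_exp_one_div_one_add_lt (by positivity)

theorem one_div_mul_integral_exp_mul_arctan_ne_one {κ T b : ℝ} (hT : 0 < T)
    (hκ : κ ≤ 1 / ((1 + T) * Real.arctan T)) (hb : 1 + T ≤ b) :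
    1 / b * ∫ s in (0 : ℝ)..T, Real.exp (κ * Real.arctan s) ≠ 1 := by
  have hb_pos : 0 < b := by linarith
  rw [one_div_mul_eq_div, Ne, div_eq_one_iff_eq hb_pos.ne']
  exact ((integral_exp_mul_arctan_lt hT hκ).trans_le hb).ne

end ArctanWeight

theorem statement_15_general {k c T : ℕ → ℝ}
    (hne : ∀ n, c n * ∫ s in (0 : ℝ)..T n, Real.exp (k n * Real.arctan s) ≠ 1) :
    ∃ x : ℕ → ℝ → ℝ, ∀ n : ℕ,
      (∀ t : ℝ, HasDerivAt (x n) (k n / (1 + t ^ 2) * x n t + t * Real.cos (x (n + 1) t)) t) ∧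
      x n 0 = c n * ∫ s in (0 : ℝ)..T n, x n s := by
  let f : C(ℝ × ℝ, ℝ) := ⟨fun q ↦ q.1 * Real.cos q.2, by fun_prop⟩
  have hf (t u : ℝ) : ‖f (t, u)‖ ≤ (⟨abs, continuous_abs⟩ : C(ℝ, ℝ)) t := by
    simpa [f, abs_mul] using mul_le_of_le_one_right (abs_nonneg t) (Real.abs_cos_le_one u)
  obtain ⟨x, hx⟩ := exists_forall_hasDerivAt_and_eq_smul_integral (a := fun n ↦ divOneAddSq (k n))
    (fun _ : ℕ ↦ hf) (by simpa only [expPrimitive_divOneAddSq] using hne)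
  exact ⟨fun n ↦ x n, hx⟩

/-- Example 3.4: the infinite system
`xₙ'(t) = (kₙ/(1+t²)) xₙ(t) + t cos(x_{n+1}(t))`, `t ∈ [0,∞)`, with nonlocal initial
conditions `xₙ(0) = (1/(n+t₀)) ∫₀^{t₀} xₙ(s) ds`, has at least one solution provided
`|kₙ| < 1/((1+t₀) arctan t₀)` for every `n`. (Components are indexed from `0` in Lean,
so the paper's `n ∈ {1,2,…}` corresponds to `n+1` here.) -/
theorem statement_15
    (t₀ : ℝ) (ht₀ : 0 < t₀)
    (k : ℕ → ℝ)
    (hk : ∀ n : ℕ, |k n| < 1 / ((1 + t₀) * Real.arctan t₀)) :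
    ∃ x : ℕ → ℝ → ℝ, ∀ n : ℕ,
      (∀ t : ℝ, 0 ≤ t →
        HasDerivWithinAt (x n)
          (k n / (1 + t ^ 2) * x n t + t * Real.cos (x (n + 1) t)) (Set.Ici (0:ℝ)) t) ∧
      x n 0 = (1 / ((n : ℝ) + 1 + t₀)) * ∫ s in (0:ℝ)..t₀, x n s := by
  obtain ⟨x, hx⟩ := statement_15_general (T := fun _ ↦ t₀) fun n ↦
    one_div_mul_integral_exp_mul_arctan_ne_one (b := n + 1 + t₀) ht₀
      ((le_abs_self _).trans (hk n).le) (by linarith [n.cast_nonneg (α := ℝ)])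
  exact ⟨x, fun n ↦ ⟨fun t _ ↦ ((hx n).1 t).hasDerivWithinAt, (hx n).2⟩⟩
end
end
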